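/- arXiv:2502.16727 — 4 statements merged into one kernel-verified Lean document; each statement's English description precedes it below -/
import Mathlib

section
/- Let K be a field, let M and N be finite-dimensional K-vector spaces, and let h : M → N be a K-linear map. Then the subspace T_h = {A ∘ h + h ∘ B : A ∈ End_K(N), B ∈ End_K(M)} of Hom_K(M, N) — the tangent space at h to the orbit of h under the action (P, Q)·h = Q ∘ h ∘ P⁻¹ of GL(M) × GL(N) — is equal to the subspace {X ∈ Hom_K(M, N) : X(ker h) ⊆ range h}. (This is the tangent-space computation for the orbit Σ^k in §3.1.1.) -/
/-- **Tangent space to the `GL(M) × GL(N)`-orbit of a linear map (§3.1.1).**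
For finite-dimensional vector spaces `M, N` over a field `K` and `h : M →ₗ[K] N`, the
tangent space `{A ∘ h + h ∘ B}` to the orbit of `h` equals
`{X : X(ker h) ⊆ range h}`. -/
theorem stmt_5 (K M N : Type*) [Field K] [AddCommGroup M] [Module K M]
    [AddCommGroup N] [Module K N] [FiniteDimensional K M] [FiniteDimensional K N]
    (h : M →ₗ[K] N) :
    {f : M →ₗ[K] N | ∃ (A : N →ₗ[K] N) (B : M →ₗ[K] M), f = A ∘ₗ h + h ∘ₗ B} =
      {f : M →ₗ[K] N | ∀ x : M, h x = 0 → f x ∈ LinearMap.range h} := by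
  obtain ⟨g, hg⟩ := h.rangeRestrict.exists_rightInverse_of_surjective h.range_rangeRestrict
  obtain ⟨s, hs⟩ := g.exists_extend
  have key : ∀ x, h (s (h x)) = h x := by
    intro x
    have h1 := LinearMap.congr_fun hs (h.rangeRestrict x)
    have h2 := congrArg Subtype.val (LinearMap.congr_fun hg (h.rangeRestrict x))
    simp only [LinearMap.comp_apply, Submodule.subtype_apply, LinearMap.id_apply] at h1 h2
    exact (congrArg h h1).trans h2
  ext f
  simp only [Set.mem_ofPred_eq]
  constructor
  · rintro ⟨A, B, rfl⟩ x hx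
    exact ⟨B x, by simp [hx]⟩
  · intro hf
    refine ⟨f ∘ₗ s, s ∘ₗ f ∘ₗ (LinearMap.id - s ∘ₗ h), ?_⟩
    ext x
    obtain ⟨y, hy⟩ := hf (x - s (h x)) (by rw [map_sub, key, sub_self])
    have h3 : h (s (f (x - s (h x)))) = f (x - s (h x)) := by rw [← hy, key]
    simp only [LinearMap.add_apply, LinearMap.comp_apply, LinearMap.sub_apply, LinearMap.id_apply]
    rw [h3, map_sub]
    abel
end

section
/- Let K be a field, let M and N be finite-dimensional K-vector spaces, and let h : M → N be a K-linear map with dim ker h = k and dim coker h = l (where coker h = N / range h). Then the quotient vector space Hom_K(M, N) / {X ∈ Hom_K(M, N) : X(ker h) ⊆ range h} is linearly isomorphic to Hom_K(ker h, coker h); consequently the tangent space {A ∘ h + h ∘ B : A ∈ End_K(N), B ∈ End_K(M)} to the GL(M) × GL(N)-orbit of h has codimension k·l in Hom_K(M, N). (This identifies the normal space of the orbit Σ^k with Hom(ker h, coker h) and gives the expected codimension kl of the degeneracy locus, as in §1.1.1 and §3.1.1.) -/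
/-- **Normal space to the orbit `Σ^k` and its codimension (§1.1.1, §3.1.1).**
For `h : M →ₗ[K] N` with `dim ker h = k` and `dim coker h = l`, the quotient of
`Hom(M, N)` by `{X : X(ker h) ⊆ range h}` is linearly isomorphic to
`Hom(ker h, coker h)`; consequently the tangent space `{A ∘ h + h ∘ B}` to the
`GL(M) × GL(N)`-orbit of `h` has codimension `k * l` in `Hom(M, N)`. -/
theorem stmt_6 (K M N : Type*) [Field K] [AddCommGroup M] [Module K M]
    [AddCommGroup N] [Module K N] [FiniteDimensional K M] [FiniteDimensional K N]
    (h : M →ₗ[K] N) (k l : ℕ)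
    (hk : Module.finrank K (LinearMap.ker h) = k)
    (hl : Module.finrank K (N ⧸ LinearMap.range h) = l) :
    Nonempty (((M →ₗ[K] N) ⧸
        Submodule.compatibleMaps (LinearMap.ker h) (LinearMap.range h)) ≃ₗ[K]
      ((LinearMap.ker h) →ₗ[K] (N ⧸ LinearMap.range h))) ∧
    Module.finrank K (M →ₗ[K] N) -
        Module.finrank K (Submodule.span K
          {f : M →ₗ[K] N | ∃ (A : N →ₗ[K] N) (B : M →ₗ[K] M), f = A ∘ₗ h + h ∘ₗ B}) =
      k * l := by
  obtain ⟨p, hp⟩ := (LinearMap.ker h).subtype.exists_leftInverse_of_injective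
    (Submodule.ker_subtype _)
  obtain ⟨q, hq⟩ := (LinearMap.range h).subtype.exists_leftInverse_of_injective
    (Submodule.ker_subtype _)
  obtain ⟨g, hg⟩ := h.rangeRestrict.exists_rightInverse_of_surjective
    (LinearMap.range_rangeRestrict h)
  obtain ⟨s, hs⟩ := (LinearMap.range h).mkQ.exists_rightInverse_of_surjective
    (Submodule.range_mkQ _)
  have hp' : ∀ x : LinearMap.ker h, p (x : M) = x := fun x => LinearMap.congr_fun hp x
  have hq' : ∀ x : LinearMap.range h, q (x : N) = x := fun x => LinearMap.congr_fun hq x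
  have hg' : ∀ x : LinearMap.range h, h (g x) = (x : N) := fun x =>
    congrArg Subtype.val (LinearMap.congr_fun hg x)
  have hs' : ∀ x, (LinearMap.range h).mkQ (s x) = x := fun x => LinearMap.congr_fun hs x
  have hr : ∀ y ∈ LinearMap.range h, h (g (q y)) = y := by
    intro y hy
    have h1 := hq' ⟨y, hy⟩
    simp only at h1
    rw [h1, hg']
  let Φ : (M →ₗ[K] N) →ₗ[K] ((LinearMap.ker h) →ₗ[K] (N ⧸ LinearMap.range h)) :=
    { toFun := fun X => (LinearMap.range h).mkQ ∘ₗ X ∘ₗ (LinearMap.ker h).subtype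
      map_add' := fun X Y => by ext x; simp
      map_smul' := fun c X => by ext x; simp }
  have hΦ : ∀ X x, Φ X x = (LinearMap.range h).mkQ (X (x : M)) := fun X x => rfl
  have hsurj : Function.Surjective Φ := by
    intro Y
    refine ⟨s ∘ₗ Y ∘ₗ p, ?_⟩
    apply LinearMap.ext
    intro x
    rw [hΦ]
    simp only [LinearMap.comp_apply]
    rw [hs', hp']
  have hker : LinearMap.ker Φ =
      Submodule.compatibleMaps (LinearMap.ker h) (LinearMap.range h) := by
    ext X
    constructor
    · intro hX x hx
      have h1 : Φ X ⟨x, hx⟩ = 0 := by rw [LinearMap.mem_ker.1 hX]; rfl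
      rw [hΦ] at h1
      exact (Submodule.Quotient.mk_eq_zero (LinearMap.range h)).1 h1
    · intro hX
      apply LinearMap.mem_ker.2
      apply LinearMap.ext
      intro x
      rw [hΦ]
      exact (Submodule.Quotient.mk_eq_zero _).2 (hX x.2)
  have hspan : Submodule.span K
      {f : M →ₗ[K] N | ∃ (A : N →ₗ[K] N) (B : M →ₗ[K] M), f = A ∘ₗ h + h ∘ₗ B} =
      Submodule.compatibleMaps (LinearMap.ker h) (LinearMap.range h) := by
    apply le_antisymm
    · rw [Submodule.span_le]
      rintro f ⟨A, B, rfl⟩ x hx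
      have hx' : h x = 0 := hx
      exact ⟨B x, by simp [hx']⟩
    · intro X hX
      apply Submodule.subset_span
      refine ⟨X ∘ₗ (LinearMap.id - (LinearMap.ker h).subtype ∘ₗ p) ∘ₗ g ∘ₗ q,
        g ∘ₗ q ∘ₗ X ∘ₗ (LinearMap.ker h).subtype ∘ₗ p, ?_⟩
      ext m
      have h1 : h (g (q (X (p m : M)))) = X (p m : M) := hr _ (hX (p m).2)
      have h2 : g (q (h m)) - m ∈ LinearMap.ker h := by
        rw [LinearMap.mem_ker, map_sub, hr _ ⟨m, rfl⟩, sub_self]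
      have h3 := congrArg Subtype.val (hp' ⟨_, h2⟩)
      simp only [map_sub, Submodule.coe_sub] at h3
      have h4 : g (q (h m)) - (p (g (q (h m))) : M) = m - (p m : M) := by
        rw [sub_eq_sub_iff_sub_eq_sub, h3]
      simp only [LinearMap.add_apply, LinearMap.comp_apply, LinearMap.sub_apply,
        LinearMap.id_apply, Submodule.subtype_apply]
      rw [h1, h4, map_sub, sub_add_cancel]
  refine ⟨⟨(Submodule.quotEquivOfEq _ _ hker.symm).trans
    (Φ.quotKerEquivOfSurjective hsurj)⟩, ?_⟩
  rw [hspan, ← hker]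
  have h1 := Φ.finrank_range_add_finrank_ker
  rw [LinearMap.range_eq_top.2 hsurj, finrank_top,
    Module.finrank_linearMap K K (LinearMap.ker h) (N ⧸ LinearMap.range h), hk, hl] at h1
  omega
end

section
/- Let K be a field and let M, N, S be finite-dimensional K-vector spaces. Given a K-linear map h : M → N, let h̃ = h × id_S : M × S → N × S be its trivial suspension, (x, s) ↦ (h x, s), and let ι : Hom_K(M, N) → Hom_K(M × S, N × S) be the embedding ι(Z)(x, s) = (Z x, 0). Then Hom_K(M × S, N × S) = T_{h̃} + ι(Hom_K(M, N)), where T_{h̃} = {A ∘ h̃ + h̃ ∘ B : A ∈ End_K(N × S), B ∈ End_K(M × S)} is the tangent space to the GL(M × S) × GL(N × S)-orbit of h̃. That is, the suspension embedding is transverse to every orbit of the group of linear coordinate changes: this is the 1-jet instance of the key Lemma 2.5 (transversality of the embedding J^k(m,n) → J^k(m+s, n+s), jg ↦ j(g × id_s), to all K-orbits). -/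
/-- **Transversality of the trivial suspension to all orbits (1-jet instance of Lemma 2.5).**
For `h : M →ₗ[K] N` with trivial suspension `h̃ = h × id_S : M × S → N × S` and the
embedding `ι : Hom(M, N) → Hom(M × S, N × S)`, `ι(Z)(x, s) = (Z x, 0)`, one has
`Hom(M × S, N × S) = T_{h̃} + ι(Hom(M, N))`, where `T_{h̃} = {A ∘ h̃ + h̃ ∘ B}` is the
tangent space to the `GL(M × S) × GL(N × S)`-orbit of `h̃`. -/
theorem stmt_7 (K M N S : Type*) [Field K] [AddCommGroup M] [Module K M]
    [AddCommGroup N] [Module K N] [AddCommGroup S] [Module K S]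
    [FiniteDimensional K M] [FiniteDimensional K N] [FiniteDimensional K S]
    (h : M →ₗ[K] N) (F : (M × S) →ₗ[K] (N × S)) :
    ∃ (A : (N × S) →ₗ[K] (N × S)) (B : (M × S) →ₗ[K] (M × S)) (Z : M →ₗ[K] N),
      F = (A ∘ₗ (h.prodMap (LinearMap.id : S →ₗ[K] S)) +
            (h.prodMap (LinearMap.id : S →ₗ[K] S)) ∘ₗ B) +
          (LinearMap.inl K N S) ∘ₗ Z ∘ₗ (LinearMap.fst K M S) := by
  refine ⟨F ∘ₗ LinearMap.inr K M S ∘ₗ LinearMap.snd K N S,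
    LinearMap.inr K M S ∘ₗ LinearMap.snd K N S ∘ₗ F ∘ₗ LinearMap.inl K M S ∘ₗ
      LinearMap.fst K M S,
    LinearMap.fst K N S ∘ₗ F ∘ₗ LinearMap.inl K M S, ?_⟩
  have h0 : F (0, 0) = 0 := F.map_zero
  ext x <;> simp [h0]
end

section
/- Let m, n ≥ 1 and let P ∈ ℚ[x_1, …, x_m, y_1, …, y_n] be a polynomial that is symmetric in x_1, …, x_m and symmetric in y_1, …, y_n separately, and which satisfies the cancellation (supersymmetry) property: the polynomial obtained from P by substituting x_m = T and y_n = T, regarded as a polynomial in T over ℚ[x_1, …, x_{m−1}, y_1, …, y_{n−1}], is constant in T. Then P belongs to the ℚ-subalgebra of ℚ[x, y] generated by the power-sum differences p_k = ∑_{i=1}^{m} x_i^k − ∑_{j=1}^{n} y_j^k for k ≥ 1. (This is the structure theorem for supersymmetric polynomials underlying the claim in §2.3 that, by the stabilization property, every Thom polynomial tp_G(W) is supersymmetric and hence can be written in terms of the quotient Chern classes.) -/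
section SS8
open PowerSeries

noncomputable def ssGeo {L : Type*} [Field L] (x : L) : PowerSeries L := PowerSeries.mk (fun k => x ^ k)
noncomputable def ssLin {L : Type*} [Field L] (x : L) : PowerSeries L := 1 - C x * X

lemma ssGeo_mul_lin {L : Type*} [Field L] (x : L) : ssGeo x * ssLin x = 1 := by
  ext k
  cases k with
  | zero => simp [ssGeo, ssLin, mul_sub]
  | succ k =>
    rw [ssLin, mul_sub, mul_one, map_sub, ← mul_assoc, coeff_succ_mul_X, mul_comm, coeff_C_mul]
    simp [ssGeo, coeff_one]
    ring

lemma ssGeo_deriv {L : Type*} [Field L] (x : L) :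
    X * d⁄dX L (ssGeo x) = ssGeo x * (ssGeo x - 1) := by
  have h := ssGeo_mul_lin x
  have h2 : d⁄dX L (ssGeo x * ssLin x) = 0 := by rw [h]; simp
  rw [Derivation.leibniz] at h2
  have h3 : d⁄dX L (ssLin x) = - C x := by
    simp [ssLin, Derivation.leibniz]
  rw [h3] at h2
  simp only [smul_eq_mul] at h2
  have h4 : ssLin x = 1 - C x * X := rfl
  linear_combination (X * ssGeo x) * h2 - (X * d⁄dX L (ssGeo x)) * h - ssGeo x * (h - ssGeo x * h4)

lemma ssLin_deriv {L : Type*} [Field L] (x : L) :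
    X * d⁄dX L (ssLin x) = ssLin x * (-(ssGeo x - 1)) := by
  have h := ssGeo_mul_lin x
  have h3 : d⁄dX L (ssLin x) = - C x := by
    simp [ssLin, Derivation.leibniz]
  rw [h3]
  have h4 : ssLin x = 1 - C x * X := rfl
  linear_combination h - h4

lemma ss_deriv_prod {L ι : Type*} [Field L] (s : Finset ι) (F q : ι → PowerSeries L)
    (h : ∀ i, X * d⁄dX L (F i) = F i * q i) :
    X * d⁄dX L (∏ i ∈ s, F i) = (∏ i ∈ s, F i) * ∑ i ∈ s, q i := by
  classical
  induction s using Finset.induction_on with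
  | empty => simp
  | insert a s ha ih =>
    rw [Finset.prod_insert ha, Finset.sum_insert ha, Derivation.leibniz]
    simp only [smul_eq_mul]
    linear_combination F a * ih + (∏ i ∈ s, F i) * h a

noncomputable def ssH {L : Type*} [Field L] {m n : ℕ} (x : Fin m → L) (y : Fin n → L) :
    PowerSeries L := (∏ j, ssLin (y j)) * ∏ i, ssGeo (x i)

lemma ssH_mem {L : Type*} [Field L] [Algebra ℚ L] {m n : ℕ} (x : Fin m → L) (y : Fin n → L)
    (A : Subalgebra ℚ L) (hA : ∀ k, 1 ≤ k → (∑ i, x i ^ k) - ∑ j, y j ^ k ∈ A) (k : ℕ) :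
    coeff k (ssH x y) ∈ A := by
  have : CharZero L := algebraRat.charZero L
  have key : X * d⁄dX L (ssH x y) =
      ssH x y * (∑ j, (-(ssGeo (y j) - 1)) + ∑ i, (ssGeo (x i) - 1)) := by
    have h1 := ss_deriv_prod Finset.univ (fun j => ssLin (y j)) _ (fun j => ssLin_deriv (y j))
    have h2 := ss_deriv_prod Finset.univ (fun j => ssGeo (x j)) _ (fun j => ssGeo_deriv (x j))
    rw [ssH, Derivation.leibniz]
    simp only [smul_eq_mul]
    linear_combination (∏ j, ssLin (y j)) * h2 + (∏ i, ssGeo (x i)) * h1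
  induction k using Nat.strong_induction_on with
  | _ k ih =>
    cases k with
    | zero =>
      have : coeff 0 (ssH x y) = 1 := by
        have h1 : ∀ z : L, constantCoeff (ssGeo z) = 1 := fun z => by
          rw [← coeff_zero_eq_constantCoeff_apply, ssGeo, coeff_mk, pow_zero]
        have h2 : ∀ z : L, constantCoeff (ssLin z) = 1 := fun z => by simp [ssLin]
        rw [coeff_zero_eq_constantCoeff_apply, ssH, map_mul, map_prod, map_prod]
        simp [h1, h2]
      rw [this]; exact one_mem _
    | succ k =>
      have hk := congrArg (coeff (k+1)) key
      rw [coeff_succ_X_mul, coeff_derivative, coeff_mul] at hk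
      have h2 : coeff (k+1) (ssH x y) = ((1 / ((k:ℚ) + 1)) : ℚ) • (coeff (k+1) (ssH x y) * ((k:L)+1)) := by
        rw [Algebra.smul_def]
        have : ((k:L)+1) ≠ 0 := by exact_mod_cast Nat.succ_ne_zero k
        simp
        field_simp
      rw [h2, hk]
      refine A.smul_mem (A.sum_mem ?_) _
      rintro ⟨a, b⟩ hab
      rw [Finset.HasAntidiagonal.mem_antidiagonal] at hab
      simp only at hab ⊢
      rcases Nat.eq_zero_or_pos b with hb | hb
      · subst hb
        have : coeff 0 (∑ j, (-(ssGeo (y j) - 1)) + ∑ i, (ssGeo (x i) - 1)) = 0 := by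
          rw [map_add, map_sum, map_sum]
          simp only [map_neg, map_sub, ssGeo, coeff_mk, coeff_one]
          simp
        rw [this, mul_zero]; exact zero_mem _
      · have : coeff b (∑ j, (-(ssGeo (y j) - 1)) + ∑ i, (ssGeo (x i) - 1)) =
            (∑ i, x i ^ b) - ∑ j, y j ^ b := by
          rw [map_add, map_sum, map_sum]
          simp only [map_neg, map_sub, ssGeo, coeff_mk, coeff_one, if_neg hb.ne']
          simp
          ring
        rw [this]
        exact A.mul_mem (ih a (by omega)) (hA b hb)

lemma ss_partial {L : Type*} [Field L] {m : ℕ} (x : Fin (m+1) → L) (hx : Function.Injective x)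
    (hx0 : ∀ i, x i ≠ 0) :
    ∑ i, C (∏ l ∈ {i}ᶜ, (x i - x l))⁻¹ * ∏ l ∈ {i}ᶜ, ssLin (x l) = X ^ m := by
  have key : ∑ i, Polynomial.C (∏ l ∈ {i}ᶜ, (x i - x l))⁻¹ *
      ∏ l ∈ {i}ᶜ, (1 - Polynomial.C (x l) * Polynomial.X) = (Polynomial.X : Polynomial L) ^ m := by
    apply Polynomial.eq_of_degrees_lt_of_eval_index_eq (s := Finset.univ) (v := fun i => (x i)⁻¹)
    · intro i _ j _ h
      exact hx (inv_injective h)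
    · refine lt_of_le_of_lt (Polynomial.degree_sum_le _ _) ?_
      rw [Finset.sup_lt_iff (by exact WithBot.bot_lt_coe _)]
      intro i _
      rw [Polynomial.C_mul']
      refine lt_of_le_of_lt (Polynomial.degree_smul_le _ _) ?_
      refine lt_of_le_of_lt (Polynomial.degree_prod_le _ _) ?_
      have : ∑ l ∈ ({i}ᶜ : Finset (Fin (m+1))), (1 - Polynomial.C (x l) * Polynomial.X).degree
          ≤ ∑ l ∈ ({i}ᶜ : Finset (Fin (m+1))), (1 : WithBot ℕ) := by
        refine Finset.sum_le_sum fun l _ => ?_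
        compute_degree
      refine lt_of_le_of_lt this ?_
      simp [Finset.card_compl]
      exact_mod_cast Nat.lt_succ_self m
    · simp
      exact_mod_cast Nat.lt_succ_self m
    · intro i _
      rw [Polynomial.eval_finsetSum, Finset.sum_eq_single i]
      · simp only [Polynomial.eval_mul, Polynomial.eval_C, Polynomial.eval_prod, Polynomial.eval_sub, Polynomial.eval_one, Polynomial.eval_X, Polynomial.eval_pow]
        have h1 : ∀ l, 1 - x l * (x i)⁻¹ = (x i - x l) * (x i)⁻¹ := by
          intro l
          have := hx0 i
          field_simp
        simp only [h1, Finset.prod_mul_distrib, Finset.prod_const]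
        rw [← mul_assoc, inv_mul_cancel₀, one_mul]
        · simp [Finset.card_compl]
        · rw [Finset.prod_ne_zero_iff]
          intro l hl
          simp at hl
          exact sub_ne_zero.2 fun h => hl (hx h).symm
      · intro j _ hj
        rw [Polynomial.eval_mul, Polynomial.eval_prod]
        refine mul_eq_zero_of_right _ (Finset.prod_eq_zero (i := i) ?_ ?_)
        · simpa using hj.symm
        · simp [hx0 i]
      · simp
  have := congrArg (Polynomial.coeToPowerSeries.ringHom : Polynomial L →+* PowerSeries L) key
  rw [map_sum, map_pow] at this
  simp only [map_mul, map_prod, map_sub, map_one] at this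
  simpa [ssLin] using this

lemma ss_coeff {L ι : Type*} [Field L] (s : Finset ι) (y : ι → L) (x : L) (a : ℕ) :
    coeff (a + s.card) ((∏ j ∈ s, ssLin (y j)) * ssGeo x) = x ^ a * ∏ j ∈ s, (x - y j) := by
  classical
  induction s using Finset.induction_on generalizing a with
  | empty => simp [ssGeo]
  | insert b s hb ih =>
    rw [Finset.prod_insert hb, Finset.prod_insert hb, Finset.card_insert_of_notMem hb]
    have : ssLin (y b) * (∏ j ∈ s, ssLin (y j)) * ssGeo x =
       ((∏ j ∈ s, ssLin (y j)) * ssGeo x) - C (y b) * (((∏ j ∈ s, ssLin (y j)) * ssGeo x) * X) := by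
      rw [ssLin]; ring
    rw [this, map_sub, coeff_C_mul, ← add_assoc, coeff_succ_mul_X, ih, add_right_comm, ih]
    ring

lemma ssHa_mem {L : Type*} [Field L] [Algebra ℚ L] {m n : ℕ} (x : Fin m → L) (y : Fin n → L)
    (hx : Function.Injective x) (hx0 : ∀ i, x i ≠ 0)
    (A : Subalgebra ℚ L) (hA : ∀ k, 1 ≤ k → (∑ i, x i ^ k) - ∑ j, y j ^ k ∈ A) (a : ℕ) :
    ∑ i, (∏ l ∈ {i}ᶜ, (x i - x l))⁻¹ * (x i ^ a * ∏ j, (x i - y j)) ∈ A := by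
  cases m with
  | zero => simp
  | succ m =>
    have h : ∑ i, (∏ l ∈ {i}ᶜ, (x i - x l))⁻¹ * (x i ^ a * ∏ j, (x i - y j)) =
        coeff (a + n) (X ^ m * ssH x y) := by
      rw [← ss_partial x hx hx0, Finset.sum_mul, map_sum]
      refine Finset.sum_congr rfl fun i _ => ?_
      have h1 : (∏ l ∈ {i}ᶜ, ssLin (x l)) * ∏ l, ssGeo (x l) = ssGeo (x i) := by
        rw [← Finset.prod_compl_mul_prod {i} (fun l => ssGeo (x l)), ← mul_assoc,
          ← Finset.prod_mul_distrib]
        simp [mul_comm (ssLin _), ssGeo_mul_lin]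
      have h2 : C (∏ l ∈ {i}ᶜ, (x i - x l))⁻¹ * (∏ l ∈ {i}ᶜ, ssLin (x l)) * ssH x y
          = C (∏ l ∈ {i}ᶜ, (x i - x l))⁻¹ * ((∏ j, ssLin (y j)) * ssGeo (x i)) := by
        rw [ssH, ← h1]; ring
      rw [h2, coeff_C_mul]
      have := ss_coeff Finset.univ y (x i) a
      rw [Finset.card_fin] at this
      rw [this]
    rw [h, coeff_X_pow_mul']
    split_ifs
    · exact ssH_mem x y A hA _
    · exact zero_mem _

lemma ss_det_mem {L : Type*} [Field L] [Algebra ℚ L] {m n : ℕ} (x : Fin m → L) (y : Fin n → L)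
    (hx : Function.Injective x) (hx0 : ∀ i, x i ≠ 0)
    (A : Subalgebra ℚ L) (hA : ∀ k, 1 ≤ k → (∑ i, x i ^ k) - ∑ j, y j ^ k ∈ A) (a : Fin m → ℕ) :
    (∏ i, ∏ j, (x i - y j)) * ((Matrix.of fun l i : Fin m => x l ^ a i).det
      / (Matrix.vandermonde x).det) ∈ A := by
  set d : Fin m → L := fun i => (∏ l ∈ {i}ᶜ, (x i - x l))⁻¹ * ∏ j, (x i - y j) with hd
  set N : Matrix (Fin m) (Fin m) L := Matrix.of fun l i : Fin m => x l ^ a i with hN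
  have hdet : (N.transpose * Matrix.diagonal d * Matrix.vandermonde x).det ∈ A := by
    rw [Matrix.det_apply]
    refine A.sum_mem fun σ _ => ?_
    rw [Units.smul_def]
    refine zsmul_mem (A.prod_mem fun i _ => ?_) _
    rw [Matrix.mul_apply]
    have := ssHa_mem x y hx hx0 A hA (a (σ i) + i)
    convert this using 1
    refine Finset.sum_congr rfl fun l _ => ?_
    simp [hN, hd, Matrix.mul_diagonal, Matrix.vandermonde_apply]
    ring
  have hV : (Matrix.vandermonde x).det ≠ 0 := by
    rw [Ne, Matrix.det_vandermonde_eq_zero_iff]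
    rintro ⟨i, j, h, hne⟩
    exact hne (hx h)
  obtain ⟨e, he, hw⟩ : ∃ e : ℤ, e * e = 1 ∧ ∏ i, ∏ l ∈ {i}ᶜ, (x i - x l) =
      (e : L) * ((Matrix.vandermonde x).det * (Matrix.vandermonde x).det) := by
    refine ⟨∏ i : Fin m, ∏ j ∈ Finset.Ioi i, (-1), ?_, ?_⟩
    · simp [← Finset.prod_mul_distrib, ← mul_pow]
    · have := Finset.prod_prod_Ioi_mul_eq_prod_prod_off_diag (fun l i : Fin m => x i - x l)
      rw [← this, Matrix.det_vandermonde]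
      push_cast
      simp only [← Finset.prod_mul_distrib]
      refine Finset.prod_congr rfl fun i _ => Finset.prod_congr rfl fun j _ => ?_
      ring
  rw [Matrix.det_mul, Matrix.det_mul, Matrix.det_transpose, Matrix.det_diagonal, hd,
    Finset.prod_mul_distrib, Finset.prod_inv_distrib, hw] at hdet
  have heL : (e : L) * e = 1 := by rw [← Int.cast_mul, he, Int.cast_one]
  have he0 : (e : L) ≠ 0 := by rintro h; rw [h] at heL; simp at heL
  have := zsmul_mem hdet e
  convert this using 1
  rw [zsmul_eq_mul]
  field_simp

end SS8

section SS8b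
open MvPolynomial

lemma ss_alt_mem {L : Type*} [Field L] [Algebra ℚ L] {m n : ℕ} (x : Fin m → L) (y : Fin n → L)
    (hx : Function.Injective x) (hx0 : ∀ i, x i ≠ 0)
    (A : Subalgebra ℚ L) (hA : ∀ k, 1 ≤ k → (∑ i, x i ^ k) - ∑ j, y j ^ k ∈ A)
    (p : MvPolynomial (Fin m) ℚ) :
    (∏ i, ∏ j, (x i - y j)) * (aeval x (∑ σ : Equiv.Perm (Fin m),
      (Equiv.Perm.sign σ : ℤ) • rename σ p) / (Matrix.vandermonde x).det) ∈ A := by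
  induction p using MvPolynomial.induction_on' with
  | monomial a c =>
    have h := A.smul_mem (ss_det_mem x y hx hx0 A hA a) c
    convert h using 1
    have hdet : (Matrix.of fun l i : Fin m => x l ^ a i).det =
        ∑ σ : Equiv.Perm (Fin m), ((Equiv.Perm.sign σ : ℤ) : L) * ∏ i, x (σ i) ^ a i :=
      Matrix.det_apply' _
    rw [hdet, Algebra.smul_def, mul_left_comm, ← mul_div_assoc (algebraMap ℚ L c), map_sum, Finset.mul_sum]
    congr 2
    refine Finset.sum_congr rfl fun σ _ => ?_
    rw [map_zsmul, aeval_rename, aeval_monomial, zsmul_eq_mul,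
      Finsupp.prod_fintype _ _ (by simp)]
    simp only [Function.comp]
    ring
  | add p q hp hq =>
    have := A.add_mem hp hq
    convert this using 1
    simp only [map_add, smul_add, Finset.sum_add_distrib]
    ring

lemma ss_sym_mem {L : Type*} [Field L] [Algebra ℚ L] {m n : ℕ} (x : Fin m → L) (y : Fin n → L)
    (hx : Function.Injective x) (hx0 : ∀ i, x i ≠ 0)
    (A : Subalgebra ℚ L) (hA : ∀ k, 1 ≤ k → (∑ i, x i ^ k) - ∑ j, y j ^ k ∈ A)
    (f : MvPolynomial (Fin m) ℚ) (hf : f.IsSymmetric) :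
    (∏ i, ∏ j, (x i - y j)) * aeval x f ∈ A := by
  have : CharZero L := algebraRat.charZero L
  have hV : (Matrix.vandermonde x).det ≠ 0 := by
    rw [Ne, Matrix.det_vandermonde_eq_zero_iff]
    rintro ⟨i, j, h, hne⟩
    exact hne (hx h)
  set v : MvPolynomial (Fin m) ℚ := (Matrix.vandermonde (X : Fin m → MvPolynomial (Fin m) ℚ)).det
    with hv
  have hvx : aeval x v = (Matrix.vandermonde x).det := by
    rw [hv, AlgHom.map_det]
    congr 1
    ext i j
    simp [Matrix.vandermonde_apply]
  have hσ : ∀ σ : Equiv.Perm (Fin m), rename σ v = ((Equiv.Perm.sign σ : ℤ) : MvPolynomial (Fin m) ℚ) * v := by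
    intro σ
    rw [hv, ← Matrix.det_permute, AlgHom.map_det]
    congr 1
    ext i j
    simp [Matrix.vandermonde_apply]
  have h := ss_alt_mem x y hx hx0 A hA (f * v)
  have h2 : ∑ σ : Equiv.Perm (Fin m), (Equiv.Perm.sign σ : ℤ) • rename σ (f * v) =
      (m.factorial : MvPolynomial (Fin m) ℚ) * (f * v) := by
    have : ∀ σ : Equiv.Perm (Fin m), (Equiv.Perm.sign σ : ℤ) • rename σ (f * v) = f * v := by
      intro σ
      rw [map_mul, hf σ, hσ, zsmul_eq_mul]
      have : ((Equiv.Perm.sign σ : ℤ) : MvPolynomial (Fin m) ℚ) * ((Equiv.Perm.sign σ : ℤ) : MvPolynomial (Fin m) ℚ) = 1 := by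
        rw [← Int.cast_mul, ← Units.val_mul, Int.units_mul_self]; simp
      linear_combination f * v * this
    rw [Finset.sum_congr rfl fun σ _ => this σ]
    simp [Fintype.card_perm]
  rw [h2, map_mul, map_mul, hvx, map_natCast] at h
  have hfac : (m.factorial : L) ≠ 0 := by exact_mod_cast m.factorial_ne_zero
  have h3 := A.smul_mem h ((m.factorial : ℚ)⁻¹)
  convert h3 using 1
  rw [Algebra.smul_def]
  simp
  field_simp

lemma ss_psum {n : ℕ} (g : MvPolynomial (Fin n) ℚ) (hg : g.IsSymmetric) :
    g ∈ Algebra.adjoin ℚ {q | ∃ k : ℕ, 1 ≤ k ∧ q = psum (Fin n) ℚ k} := by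
  set B := Algebra.adjoin ℚ {q | ∃ k : ℕ, 1 ≤ k ∧ q = psum (Fin n) ℚ k} with hB
  have he : ∀ k, esymm (Fin n) ℚ k ∈ B := by
    intro k
    induction k using Nat.strong_induction_on with
    | _ k ih =>
      rcases Nat.eq_zero_or_pos k with rfl | hk
      · simp
      have h := mul_esymm_eq_sum (Fin n) ℚ k
      have h1 : (k : MvPolynomial (Fin n) ℚ) * esymm (Fin n) ℚ k ∈ B := by
        rw [h]
        have hneg : ∀ r : ℕ, (-1 : MvPolynomial (Fin n) ℚ) ^ r ∈ B := fun r =>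
          pow_mem (neg_mem (one_mem _)) r
        refine B.mul_mem (hneg _) (B.sum_mem ?_)
        rintro ⟨a, b⟩ hab
        rw [Finset.mem_filter, Finset.HasAntidiagonal.mem_antidiagonal] at hab
        simp only at hab ⊢
        refine B.mul_mem (B.mul_mem (hneg _) (ih a hab.2)) ?_
        exact Algebra.subset_adjoin ⟨b, by omega, rfl⟩
      have h2 := B.smul_mem h1 ((k : ℚ)⁻¹)
      convert h2 using 1
      rw [← map_natCast (C : ℚ →+* MvPolynomial (Fin n) ℚ), ← C_mul', ← mul_assoc, ← C_mul,
        inv_mul_cancel₀ (by exact_mod_cast hk.ne'), C_1, one_mul]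
  obtain ⟨p, hp⟩ := esymmAlgHom_surjective (σ := Fin n) (n := n) ℚ (by simp) ⟨g, hg⟩
  have hp' := congrArg Subtype.val hp
  rw [esymmAlgHom_apply] at hp'
  simp only at hp'
  rw [← hp']
  have : aeval (fun i : Fin n ↦ esymm (Fin n) ℚ (i + 1)) p ∈
      Algebra.adjoin ℚ (Set.range (fun i : Fin n ↦ esymm (Fin n) ℚ (i + 1))) := by
    rw [Algebra.adjoin_range_eq_range_aeval]
    exact ⟨p, rfl⟩
  refine (Algebra.adjoin_le ?_ : _ ≤ B) this
  rintro _ ⟨i, rfl⟩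
  exact he _

noncomputable abbrev ssP (m n k : ℕ) : MvPolynomial (Fin m ⊕ Fin n) ℚ :=
  (∑ i : Fin m, X (Sum.inl i) ^ k) - ∑ j : Fin n, X (Sum.inr j) ^ k

noncomputable def ssA (m n : ℕ) : Subalgebra ℚ (MvPolynomial (Fin m ⊕ Fin n) ℚ) :=
  Algebra.adjoin ℚ {q | ∃ k : ℕ, 1 ≤ k ∧ q = ssP m n k}

noncomputable def ssR (m n : ℕ) : MvPolynomial (Fin m ⊕ Fin n) ℚ :=
  ∏ i : Fin m, ∏ j : Fin n, (X (Sum.inl i) - X (Sum.inr j))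

lemma ssP_mem (m n k : ℕ) (hk : 1 ≤ k) : ssP m n k ∈ ssA m n :=
  Algebra.subset_adjoin ⟨k, hk, rfl⟩

lemma ssR_mul_left (m n : ℕ) (f : MvPolynomial (Fin m) ℚ) (hf : f.IsSymmetric) :
    ssR m n * rename Sum.inl f ∈ ssA m n := by
  let S := MvPolynomial (Fin m ⊕ Fin n) ℚ
  let L := FractionRing S
  let φ : S →ₐ[ℚ] L := IsScalarTower.toAlgHom ℚ S L
  have hφ : Function.Injective φ := IsFractionRing.injective S L
  have h := ss_sym_mem (fun i : Fin m => φ (X (Sum.inl i))) (fun j : Fin n => φ (X (Sum.inr j)))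
    (fun i j h => Sum.inl_injective (X_injective (hφ h))) (fun i h => by
      rw [← map_zero φ] at h; exact X_ne_zero _ (hφ h)) ((ssA m n).map φ)
    (fun k hk => ⟨ssP m n k, ssP_mem m n k hk, by simp [ssP]⟩) f hf
  obtain ⟨q, hq, hqe⟩ := h
  have : q = ssR m n * rename Sum.inl f := by
    apply hφ
    refine hqe.trans ?_
    rw [map_mul, ssR, map_prod]
    congr 1
    · simp
    · rw [← AlgHom.comp_apply]
      congr 1
      ext i
      simp only [AlgHom.comp_apply, aeval_X]
      exact congrArg φ (rename_X _ _).symm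
  rw [← this]; exact hq

lemma ssR_mul_both (m n : ℕ) (f : MvPolynomial (Fin m) ℚ) (hf : f.IsSymmetric)
    (g : MvPolynomial (Fin n) ℚ) (hg : g.IsSymmetric) :
    ssR m n * (rename Sum.inl f * rename Sum.inr g) ∈ ssA m n := by
  have hg2 := ss_psum g hg
  clear hg
  have key : ∀ F : MvPolynomial (Fin m ⊕ Fin n) ℚ,
      (∀ f : MvPolynomial (Fin m) ℚ, f.IsSymmetric → ssR m n * rename Sum.inl f * F ∈ ssA m n) →
      (∀ f : MvPolynomial (Fin m) ℚ, f.IsSymmetric →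
        ssR m n * rename Sum.inl f * (rename Sum.inr g * F) ∈ ssA m n) := by
    induction hg2 using Algebra.adjoin_induction with
    | mem q hq =>
      obtain ⟨k, hk, rfl⟩ := hq
      intro F hF f hf
      have h1 := hF (f * psum (Fin m) ℚ k) (hf.mul (psum_isSymmetric _ _ _))
      have h2 := (ssA m n).mul_mem (ssP_mem m n k hk) (hF f hf)
      convert (ssA m n).sub_mem h1 h2 using 1
      simp only [ssP, psum, map_mul, map_sum, map_pow, rename_X]
      ring
    | algebraMap r =>
      intro F hF f hf
      convert (ssA m n).smul_mem (hF f hf) r using 1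
      rw [AlgHom.commutes, Algebra.smul_def]
      ring
    | add a b _ _ ha hb =>
      intro F hF f hf
      convert (ssA m n).add_mem (ha F hF f hf) (hb F hF f hf) using 1
      rw [map_add]; ring
    | mul a b _ _ ha hb =>
      intro F hF f hf
      convert ha _ (hb F hF) f hf using 1
      rw [map_mul]; ring
  have := key 1 (fun f hf => by rw [mul_one]; exact ssR_mul_left m n f hf) f hf
  convert this using 1
  ring

lemma ss_symz {m : ℕ} (u : MvPolynomial (Fin m) ℚ) :
    (∑ σ : Equiv.Perm (Fin m), rename σ u).IsSymmetric := by
  intro τ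
  rw [map_sum]
  simp only [rename_rename]
  exact Fintype.sum_equiv (Equiv.mulLeft τ) _ _ (fun σ => rfl)

lemma ssR_mul_avg (m n : ℕ) (F : MvPolynomial (Fin m ⊕ Fin n) ℚ) :
    ssR m n * (∑ σ : Equiv.Perm (Fin m), ∑ τ : Equiv.Perm (Fin n), rename (Sum.map σ τ) F)
      ∈ ssA m n := by
  induction F using MvPolynomial.induction_on' with
  | monomial s c =>
    set u : MvPolynomial (Fin m) ℚ := ∏ i, X i ^ s (Sum.inl i)
    set v : MvPolynomial (Fin n) ℚ := ∏ i, X i ^ s (Sum.inr i)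
    have h := (ssA m n).smul_mem (ssR_mul_both m n _ (ss_symz u) _ (ss_symz v)) c
    convert h using 1
    rw [← mul_smul_comm]
    congr 1
    rw [map_sum, map_sum, Finset.sum_mul_sum, Finset.smul_sum]
    refine Finset.sum_congr rfl fun σ _ => ?_
    rw [Finset.smul_sum]
    refine Finset.sum_congr rfl fun τ _ => ?_
    rw [monomial_eq, Finsupp.prod_fintype _ _ (by simp), Fintype.prod_sum_type, ← C_mul']
    simp [u, v, map_prod]
  | add p q hp hq =>
    convert (ssA m n).add_mem hp hq using 1
    simp only [map_add, Finset.sum_add_distrib]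
    ring

lemma ssR_mul (m n : ℕ) (F : MvPolynomial (Fin m ⊕ Fin n) ℚ)
    (hF : ∀ (σ : Equiv.Perm (Fin m)) (τ : Equiv.Perm (Fin n)), rename (Sum.map σ τ) F = F) :
    ssR m n * F ∈ ssA m n := by
  have h := ssR_mul_avg m n F
  simp only [hF, Finset.sum_const, Finset.card_univ, Fintype.card_perm, Fintype.card_fin, ← mul_smul] at h
  have h2 := (ssA m n).smul_mem h (((m.factorial * n.factorial : ℕ) : ℚ)⁻¹)
  convert h2 using 1
  rw [← Nat.cast_smul_eq_nsmul ℚ, mul_smul_comm, smul_smul, inv_mul_cancel₀, one_smul]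
  exact_mod_cast mul_ne_zero m.factorial_ne_zero n.factorial_ne_zero

end SS8b

section SS8c
open MvPolynomial

lemma ss_dvd {σ : Type*} [DecidableEq σ] (a b : σ) (D : MvPolynomial σ ℚ)
    (h : aeval (Function.update (X : σ → MvPolynomial σ ℚ) a (X b)) D = 0) : X a - X b ∣ D := by
  set I := Ideal.span {(X a - X b : MvPolynomial σ ℚ)}
  have hc : (Ideal.Quotient.mkₐ ℚ I).comp (aeval (Function.update (X : σ → MvPolynomial σ ℚ) a (X b)))
      = Ideal.Quotient.mkₐ ℚ I := by
    ext i
    by_cases hi : i = a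
    · subst hi
      simp
      rw [eq_comm, Ideal.Quotient.eq]
      exact Ideal.mem_span_singleton_self _
    · simp [hi]
  have := congrArg (fun g => g D) hc
  simp only [AlgHom.comp_apply, h, map_zero] at this
  rw [← Ideal.mem_span_singleton]
  exact Ideal.Quotient.eq_zero_iff_mem.1 this.symm

lemma ss_dvd_iff {σ : Type*} [DecidableEq σ] (a b : σ) (hab : a ≠ b) (D : MvPolynomial σ ℚ) :
    X a - X b ∣ D ↔ aeval (Function.update (X : σ → MvPolynomial σ ℚ) a (X b)) D = 0 := by
  refine ⟨?_, ss_dvd a b D⟩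
  rintro ⟨E, rfl⟩
  simp [hab.symm]

lemma ss_prime {σ : Type*} [DecidableEq σ] (a b : σ) (hab : a ≠ b) :
    Prime (X a - X b : MvPolynomial σ ℚ) := by
  refine ⟨?_, ?_, ?_⟩
  · rw [sub_ne_zero]
    exact fun h => hab (X_injective h)
  · intro h
    have := (ss_dvd_iff a b hab 1).1 h.dvd
    simp at this
  · intro p q h
    rw [ss_dvd_iff a b hab] at h ⊢
    rw [ss_dvd_iff a b hab]
    rwa [map_mul, mul_eq_zero] at h

lemma ssR_dvd {m n : ℕ} (D : MvPolynomial (Fin m ⊕ Fin n) ℚ)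
    (h : ∀ i j v, v (Sum.inl i) = v (Sum.inr j) → eval v D = 0) : ssR m n ∣ D := by
  have : ssR m n = ∏ p : Fin m × Fin n, (X (Sum.inl p.1) - X (Sum.inr p.2)) := by
    rw [Fintype.prod_prod_type]; rfl
  rw [this]
  apply Finset.prod_dvd_of_isRelPrime
  · rintro ⟨i, j⟩ _ ⟨i', j'⟩ _ hne
    simp only [Function.onFun]
    rw [(ss_prime (Sum.inl i : Fin m ⊕ Fin n) (Sum.inr j) (by simp)).irreducible.isRelPrime_iff_not_dvd,
      ss_dvd_iff _ _ (by simp)]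
    simp only [map_sub, aeval_X, Function.update_apply]
    rw [sub_eq_zero]
    simp only [Sum.inl.injEq, reduceCtorEq, if_false]
    split_ifs with hi
    · intro h
      have := X_injective h
      simp at this
      exact hne (by rw [hi, this])
    · intro h
      have := X_injective h
      simp at this
  · rintro ⟨i, j⟩ _
    apply ss_dvd
    apply MvPolynomial.funext
    intro v
    rw [map_zero]
    have : eval v (aeval (Function.update X (Sum.inl i) (X (Sum.inr j))) D) =
        eval (Function.update v (Sum.inl i) (v (Sum.inr j))) D := by
      rw [← aeval_eq_eval, ← aeval_eq_eval,
        ← AlgHom.comp_apply]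
      congr 1
      ext k
      by_cases hk : k = Sum.inl i
      · subst hk; simp
      · simp [hk]
    rw [this]
    exact h i j _ (by simp)

lemma ss_core {m n : ℕ} (D : MvPolynomial (Fin m ⊕ Fin n) ℚ)
    (hs : ∀ (σ : Equiv.Perm (Fin m)) (τ : Equiv.Perm (Fin n)), rename (Sum.map σ τ) D = D)
    (h : ∀ i j v, v (Sum.inl i) = v (Sum.inr j) → eval v D = 0) : D ∈ ssA m n := by
  obtain ⟨F, rfl⟩ := ssR_dvd D h
  refine ssR_mul m n F fun σ τ => ?_
  have hR : rename (Sum.map σ τ) (ssR m n) = ssR m n := by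
    rw [ssR, map_prod]
    simp only [map_prod, map_sub, rename_X, Sum.map_inl, Sum.map_inr]
    rw [Equiv.prod_comp σ (fun i => ∏ j, ((X (Sum.inl i) - X (Sum.inr (τ j)) : MvPolynomial (Fin m ⊕ Fin n) ℚ)))]
    refine Finset.prod_congr rfl fun i _ => ?_
    exact Equiv.prod_comp τ (fun j => ((X (Sum.inl i) - X (Sum.inr j) : MvPolynomial (Fin m ⊕ Fin n) ℚ)))
  have hR0 : ssR m n ≠ 0 := by
    rw [ssR]
    refine Finset.prod_ne_zero_iff.2 fun i _ => Finset.prod_ne_zero_iff.2 fun j _ => ?_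
    exact (ss_prime _ _ (by simp)).ne_zero
  have := hs σ τ
  rw [map_mul, hR] at this
  exact mul_left_cancel₀ hR0 this

lemma ss_eval_rename {m n : ℕ} (P : MvPolynomial (Fin m ⊕ Fin n) ℚ)
    (hs : ∀ (σ : Equiv.Perm (Fin m)) (τ : Equiv.Perm (Fin n)), rename (Sum.map σ τ) P = P)
    (σ : Equiv.Perm (Fin m)) (τ : Equiv.Perm (Fin n)) (x : Fin m → ℚ) (y : Fin n → ℚ) :
    eval (Sum.elim (x ∘ σ) (y ∘ τ)) P = eval (Sum.elim x y) P := by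
  conv_rhs => rw [← hs σ τ, eval_rename, Sum.elim_comp_map]

lemma ss_main (m : ℕ) : ∀ (n : ℕ) (P : MvPolynomial (Fin m ⊕ Fin n) ℚ)
    (_ : ∀ (σ : Equiv.Perm (Fin m)) (τ : Equiv.Perm (Fin n)), rename (Sum.map σ τ) P = P)
    (_ : ∀ i j x y t, eval (Sum.elim (Function.update x i t) (Function.update y j t)) P =
      eval (Sum.elim (Function.update x i 0) (Function.update y j 0)) P), P ∈ ssA m n := by
  induction m with
  | zero => exact fun n P hs _ => ss_core P hs (fun i => i.elim0)
  | succ m ih =>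
    intro n
    cases n with
    | zero => exact fun P hs _ => ss_core P hs (fun _ j => j.elim0)
    | succ n =>
      intro P hs hc
      set Q : MvPolynomial (Fin m ⊕ Fin n) ℚ := aeval (Sum.elim (Fin.cons 0 (fun i => X (Sum.inl i)))
        (Fin.cons 0 (fun j => X (Sum.inr j)))) P with hQ
      have evQ : ∀ x y, eval (Sum.elim x y) Q = eval (Sum.elim (Fin.cons 0 x) (Fin.cons 0 y)) P := by
        intro x y
        rw [hQ, ← aeval_eq_eval, ← aeval_eq_eval,
          ← AlgHom.comp_apply]
        congr 1
        ext k
        rcases k with k | k <;> refine Fin.cases ?_ (fun k => ?_) k <;> simp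
      have hQA : Q ∈ ssA m n := by
        apply ih
        · intro σ τ
          apply MvPolynomial.funext
          intro v
          obtain ⟨x, y, rfl⟩ : ∃ x y, v = Sum.elim x y :=
            ⟨v ∘ Sum.inl, v ∘ Sum.inr, (Sum.elim_comp_inl_inr v).symm⟩
          rw [eval_rename, Sum.elim_comp_map, evQ, evQ,
            ← ss_eval_rename P hs (Equiv.Perm.decomposeFin.symm (0, σ))
              (Equiv.Perm.decomposeFin.symm (0, τ)) (Fin.cons 0 x) (Fin.cons 0 y)]
          congr 2
          congr 1 <;> (funext k; refine Fin.cases ?_ (fun k => ?_) k <;> simp)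
        · intro i j x y t
          rw [evQ, evQ, Fin.cons_update, Fin.cons_update, Fin.cons_update, Fin.cons_update]
          exact hc _ _ _ _ _
      obtain ⟨G, hG⟩ : ∃ G : MvPolynomial ℕ ℚ, aeval (fun k => ssP m n (k+1)) G = Q := by
        have : Q ∈ Algebra.adjoin ℚ (Set.range (fun k => ssP m n (k+1))) := by
          refine Algebra.adjoin_mono ?_ hQA
          rintro _ ⟨k, hk, rfl⟩
          exact ⟨k - 1, by simp only [Nat.sub_add_cancel hk]⟩
        rw [Algebra.adjoin_range_eq_range_aeval] at this
        exact this
      set P' : MvPolynomial (Fin (m+1) ⊕ Fin (n+1)) ℚ := aeval (fun k => ssP (m+1) (n+1) (k+1)) G with hP'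
      have hP'A : P' ∈ ssA (m+1) (n+1) := by
        have : P' ∈ Algebra.adjoin ℚ (Set.range (fun k => ssP (m+1) (n+1) (k+1))) := by
          rw [Algebra.adjoin_range_eq_range_aeval]
          exact ⟨G, rfl⟩
        refine Algebra.adjoin_mono ?_ this
        rintro _ ⟨k, rfl⟩
        exact ⟨k + 1, by omega, rfl⟩
      have hP's : ∀ (σ : Equiv.Perm (Fin (m+1))) (τ : Equiv.Perm (Fin (n+1))),
          rename (Sum.map σ τ) P' = P' := by
        intro σ τ
        rw [hP', ← AlgHom.comp_apply]
        congr 1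
        ext1 k
        simp only [AlgHom.comp_apply, aeval_X, ssP, map_sub, map_sum, map_pow, rename_X,
          Sum.map_inl, Sum.map_inr]
        rw [Equiv.sum_comp σ (fun i => (X (Sum.inl i) : MvPolynomial (Fin (m+1) ⊕ Fin (n+1)) ℚ) ^ (k+1)),
          Equiv.sum_comp τ (fun i => (X (Sum.inr i) : MvPolynomial (Fin (m+1) ⊕ Fin (n+1)) ℚ) ^ (k+1))]
      have hP'e : ∀ x y t, eval (Sum.elim (Fin.cons t x) (Fin.cons t y)) P' = eval (Sum.elim x y) Q := by
        intro x y t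
        rw [← hG, hP', ← aeval_eq_eval, ← aeval_eq_eval,
          ← AlgHom.comp_apply, ← AlgHom.comp_apply]
        congr 1
        ext k
        simp [ssP, Fin.sum_univ_succ]
      have hD : P - P' ∈ ssA (m+1) (n+1) := by
        have hDs : ∀ (σ : Equiv.Perm (Fin (m+1))) (τ : Equiv.Perm (Fin (n+1))),
            rename (Sum.map σ τ) (P - P') = P - P' := by
          intro σ τ
          rw [map_sub, hs, hP's]
        refine ss_core _ hDs ?_
        intro i j v hv
        obtain ⟨x, y, rfl⟩ : ∃ x y, v = Sum.elim x y :=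
            ⟨v ∘ Sum.inl, v ∘ Sum.inr, (Sum.elim_comp_inl_inr v).symm⟩
        rw [← ss_eval_rename _ hDs (Equiv.swap 0 i) (Equiv.swap 0 j)]
        have h0 : (x ∘ Equiv.swap 0 i) 0 = (y ∘ Equiv.swap 0 j) 0 := by simpa using hv
        generalize x ∘ Equiv.swap 0 i = x' at h0
        generalize y ∘ Equiv.swap 0 j = y' at h0
        have e1 : x' = Fin.cons (x' 0) (Fin.tail x') := (Fin.cons_self_tail x').symm
        have e2 : y' = Fin.cons (x' 0) (Fin.tail y') := by rw [h0]; exact (Fin.cons_self_tail y').symm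
        have h3 := hc 0 0 x' y' (x' 0)
        have h4 := hP'e (Fin.tail x') (Fin.tail y') (x' 0)
        rw [← e1, ← e2, evQ] at h4
        have e3 : Function.update x' 0 (x' 0) = x' := Function.update_eq_self _ _
        have e4 : Function.update y' 0 (x' 0) = y' := by rw [h0]; exact Function.update_eq_self _ _
        have e5 : ∀ {r : ℕ} (z : Fin (r+1) → ℚ), Function.update z 0 0 = Fin.cons 0 (Fin.tail z) := by
          intro r z
          funext k
          refine Fin.cases ?_ (fun k => ?_) k <;> simp [Fin.tail]
        rw [e3, e4, e5, e5] at h3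
        rw [map_sub, h3, h4, sub_self]
      have := (ssA (m+1) (n+1)).add_mem hD hP'A
      rwa [sub_add_cancel] at this

lemma ss_eval₂ {S : Type*} (F : S → Polynomial (MvPolynomial S ℚ)) (v : S → ℚ) (t : ℚ)
    (P : MvPolynomial S ℚ) :
    Polynomial.eval₂ (eval v) t (aeval F P) =
      eval (fun k => Polynomial.eval₂ (eval v) t (F k)) P := by
  induction P using MvPolynomial.induction_on with
  | C r =>
    rw [← MvPolynomial.algebraMap_eq, AlgHom.commutes, MvPolynomial.algebraMap_eq, eval_C,
      IsScalarTower.algebraMap_apply ℚ (MvPolynomial S ℚ) (Polynomial (MvPolynomial S ℚ))]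
    simp [MvPolynomial.algebraMap_eq]
  | add p q hp hq => rw [map_add, map_add, Polynomial.eval₂_add, hp, hq]
  | mul_X p k hp => rw [map_mul, map_mul, Polynomial.eval₂_mul, hp, aeval_X, eval_X]

end SS8c

open MvPolynomial in
/-- **Structure theorem for supersymmetric polynomials (§2.3).**
If `P ∈ ℚ[x₁,…,x_m, y₁,…,y_n]` is symmetric in the `x`'s, symmetric in the `y`'s, and
becomes independent of `T` under the substitution `x_m = y_n = T`, then `P` lies in the
`ℚ`-subalgebra generated by the power-sum differences `p_k = ∑ xᵢᵏ − ∑ yⱼᵏ`, `k ≥ 1`. -/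
theorem stmt_8 (m n : ℕ) (hm : 1 ≤ m) (hn : 1 ≤ n)
    (P : MvPolynomial (Fin m ⊕ Fin n) ℚ)
    (hx : ∀ σ : Equiv.Perm (Fin m), rename (Sum.map (⇑σ) id) P = P)
    (hy : ∀ τ : Equiv.Perm (Fin n), rename (Sum.map id (⇑τ)) P = P)
    (hcancel : ∃ q : MvPolynomial (Fin m ⊕ Fin n) ℚ,
      aeval (fun v : Fin m ⊕ Fin n =>
        match v with
        | Sum.inl i => if (i : ℕ) = m - 1 then
            (Polynomial.X : Polynomial (MvPolynomial (Fin m ⊕ Fin n) ℚ))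
          else Polynomial.C (X (Sum.inl i))
        | Sum.inr j => if (j : ℕ) = n - 1 then
            (Polynomial.X : Polynomial (MvPolynomial (Fin m ⊕ Fin n) ℚ))
          else Polynomial.C (X (Sum.inr j))) P = Polynomial.C q) :
    P ∈ Algebra.adjoin ℚ {q : MvPolynomial (Fin m ⊕ Fin n) ℚ | ∃ k : ℕ, 1 ≤ k ∧
      q = (∑ i : Fin m, X (Sum.inl i) ^ k) - ∑ j : Fin n, X (Sum.inr j) ^ k} := by
  have hs : ∀ (σ : Equiv.Perm (Fin m)) (τ : Equiv.Perm (Fin n)), rename (Sum.map σ τ) P = P := by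
    intro σ τ
    conv_rhs => rw [← hx σ, ← hy τ, rename_rename, Sum.map_comp_map]
    rfl
  refine ss_main m n P hs ?_
  obtain ⟨q, hq⟩ := hcancel
  let i0 : Fin m := ⟨m - 1, by omega⟩
  let j0 : Fin n := ⟨n - 1, by omega⟩
  have h0 : ∀ x y t, eval (Sum.elim (Function.update x i0 t) (Function.update y j0 t)) P =
      eval (Sum.elim x y) q := by
    intro x y t
    have h := congrArg (Polynomial.eval₂RingHom (eval (Sum.elim x y)) t) hq
    simp only [Polynomial.coe_eval₂RingHom, Polynomial.eval₂_C] at h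
    rw [← h, ss_eval₂]
    congr 2
    funext k
    rcases k with k | k
    · by_cases hk : (k : ℕ) = m - 1
      · have : k = i0 := Fin.ext hk
        simp only [if_pos hk, Polynomial.eval₂_X, Sum.elim_inl]
        rw [this, Function.update_self]
      · have : k ≠ i0 := fun h => hk (congrArg Fin.val h)
        simp only [if_neg hk, Polynomial.eval₂_C, eval_X, Sum.elim_inl, Function.update_of_ne this]
    · by_cases hk : (k : ℕ) = n - 1
      · have : k = j0 := Fin.ext hk
        simp only [if_pos hk, Polynomial.eval₂_X, Sum.elim_inr]
        rw [this, Function.update_self]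
      · have : k ≠ j0 := fun h => hk (congrArg Fin.val h)
        simp only [if_neg hk, Polynomial.eval₂_C, eval_X, Sum.elim_inr, Function.update_of_ne this]
  have hu : ∀ {r : ℕ} (i k : Fin r) (z : Fin r → ℚ) (t : ℚ),
      Function.update z i t ∘ Equiv.swap k i = Function.update (z ∘ Equiv.swap k i) k t := by
    intro r i k z t
    funext l
    simp only [Function.comp, Function.update_apply]
    have : Equiv.swap k i l = i ↔ l = k := by
      rw [Equiv.swap_apply_eq_iff, Equiv.swap_apply_right]
    simp only [this]
  intro i j x y t
  rw [← ss_eval_rename P hs (Equiv.swap i0 i) (Equiv.swap j0 j),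
    ← ss_eval_rename P hs (Equiv.swap i0 i) (Equiv.swap j0 j) (Function.update x i 0),
    hu, hu, hu, hu, h0, h0]
end
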